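/- Let K̃ be an N×N matrix-valued function of one complex variable and define K(u) = C^{-1} K̃(q̃^{-1} u). Then K̃ satisfies the twisted reflection equation (tRE) R(u/v) K̃1(u) R^{t1}(1/(uv)) K̃2(v) = K̃2(v) R^{t1}(1/(uv)) K̃1(u) R(u/v) for all u,v where all factors are defined, if and only if K satisfies the cross-conjugated twisted reflection equation (CtRE) R21(u/v) K1(u) R^∨(uv) K2(v) = K2(v) R^∨21(uv) K1(u) R(u/v) for all u,v where all factors are defined. -/

import Mathlib

/-! Put `c = C ⊗ C = C₁ C₂`. The equivalence is pointwise: evaluate the twisted equation at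
`(q̃⁻¹ u, q̃⁻¹ v)` and the cross-conjugated one at `(u, v)`. Both then involve the matrices
`R = R(u/v)` and `X = R^{t₁}(q̃² / (uv))`, and the second equation is the first one multiplied on the
left by the invertible matrix `c⁻¹`. This rests on two symmetries of `R`, checked on matrix entries:

* `P R P = Rᵀ` (`RBJ_flip`), which gives `P X P = X` (`t1_flip`);
* `c (P R P) = R c` (`RBJ_conj`), because `i ↦ N + 1 - i` reverses the order of the indices, while
  the weights `(-q)^i` cancel since `R` preserves the multiset of the two indices.

Everything else is commutation of operators acting in different tensor factors. -/

open Matrix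
open scoped Kronecker

noncomputable section

/-- 1-based matrix unit `E_{a b}` in the `N × N` complex matrices. -/
def Em (N : ℕ) (a b : ℕ) : Matrix (Fin N) (Fin N) ℂ :=
  Matrix.of fun i j => if (i : ℕ) + 1 = a ∧ (j : ℕ) + 1 = b then 1 else 0

/-- The flip (permutation) operator `P = Σ_{i,j} E_{ij} ⊗ E_{ji}`. -/
def Pmat (N : ℕ) : Matrix (Fin N × Fin N) (Fin N × Fin N) ℂ :=
  ∑ i ∈ Finset.Icc 1 N, ∑ j ∈ Finset.Icc 1 N, Em N i j ⊗ₖ Em N j i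

/-- The constant R-matrix `R_q`. -/
def Rconst (N : ℕ) (q : ℂ) : Matrix (Fin N × Fin N) (Fin N × Fin N) ℂ :=
  (∑ i ∈ Finset.Icc 1 N, ∑ j ∈ Finset.Icc 1 N,
      (if i = j then q else 1) • (Em N i i ⊗ₖ Em N j j))
    + ∑ i ∈ Finset.Icc 1 N, ∑ j ∈ Finset.Icc 1 N,
        (if i < j then q - q⁻¹ else 0) • (Em N i j ⊗ₖ Em N j i)

/-- `f_q(u) = 1/(q - q⁻¹ u)`. -/
def fBJ (q u : ℂ) : ℂ := (q - q⁻¹ * u)⁻¹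

/-- The Bazhanov–Jimbo R-matrix `R(u) = f_q(u) R_q + f_{q⁻¹}(u⁻¹) P R_{q⁻¹} P`. -/
def RBJ (N : ℕ) (q u : ℂ) : Matrix (Fin N × Fin N) (Fin N × Fin N) ℂ :=
  fBJ q u • Rconst N q + fBJ q⁻¹ u⁻¹ • (Pmat N * Rconst N q⁻¹ * Pmat N)

/-- `X1 = X ⊗ I`. -/
def M1 (N : ℕ) (X : Matrix (Fin N) (Fin N) ℂ) : Matrix (Fin N × Fin N) (Fin N × Fin N) ℂ :=
  X ⊗ₖ (1 : Matrix (Fin N) (Fin N) ℂ)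

/-- `X2 = I ⊗ X`. -/
def M2 (N : ℕ) (X : Matrix (Fin N) (Fin N) ℂ) : Matrix (Fin N × Fin N) (Fin N × Fin N) ℂ :=
  (1 : Matrix (Fin N) (Fin N) ℂ) ⊗ₖ X

/-- `R21(u) = P R(u) P`. -/
def R21 (N : ℕ) (q u : ℂ) : Matrix (Fin N × Fin N) (Fin N × Fin N) ℂ :=
  Pmat N * RBJ N q u * Pmat N

/-- Transposition in the first tensor factor. -/
def t1 (N : ℕ) (X : Matrix (Fin N × Fin N) (Fin N × Fin N) ℂ) :
    Matrix (Fin N × Fin N) (Fin N × Fin N) ℂ :=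
  Matrix.of fun p r => X (r.1, p.2) (p.1, r.2)

/-- The charge conjugation matrix `C = Σ_i (-q)^i E_{ī i}` where `ī = N+1-i`. -/
def Cmat (N : ℕ) (q : ℂ) : Matrix (Fin N) (Fin N) ℂ :=
  ∑ i ∈ Finset.Icc 1 N, (-q) ^ i • Em N (N + 1 - i) i

/-- The C-conjugated R-matrix `R^∨(u) = C2⁻¹ R^{t1}(q̃² u⁻¹) C2` with `q̃ = s^N`. -/
def Rvee (N : ℕ) (q s u : ℂ) : Matrix (Fin N × Fin N) (Fin N × Fin N) ℂ :=
  (M2 N (Cmat N q))⁻¹ * t1 N (RBJ N q ((s ^ N) ^ 2 * u⁻¹)) * M2 N (Cmat N q)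

/-- `R^∨21(u) = P R^∨(u) P`. -/
def Rvee21 (N : ℕ) (q s u : ℂ) : Matrix (Fin N × Fin N) (Fin N × Fin N) ℂ :=
  Pmat N * Rvee N q s u * Pmat N

/-- The untwisted reflection equation at spectral parameters `(u, v)`. -/
def REeq (N : ℕ) (q : ℂ) (K : ℂ → Matrix (Fin N) (Fin N) ℂ) (u v : ℂ) : Prop :=
  R21 N q (u / v) * M1 N (K u) * RBJ N q (u * v) * M2 N (K v)
    = M2 N (K v) * R21 N q (u * v) * M1 N (K u) * RBJ N q (u / v)

/-- `K` satisfies the untwisted reflection equation (RE) for all `u, v`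
for which all factors are defined. -/
def IsRESol (N : ℕ) (q : ℂ) (K : ℂ → Matrix (Fin N) (Fin N) ℂ) : Prop :=
  ∀ u v : ℂ, u ≠ 0 → v ≠ 0 → u / v ≠ q ^ 2 → u / v ≠ q⁻¹ ^ 2 →
    u * v ≠ q ^ 2 → u * v ≠ q⁻¹ ^ 2 → REeq N q K u v

/-- The cross-conjugated twisted reflection equation at `(u, v)`. -/
def CtREeq (N : ℕ) (q s : ℂ) (K : ℂ → Matrix (Fin N) (Fin N) ℂ) (u v : ℂ) : Prop :=
  R21 N q (u / v) * M1 N (K u) * Rvee N q s (u * v) * M2 N (K v)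
    = M2 N (K v) * Rvee21 N q s (u * v) * M1 N (K u) * RBJ N q (u / v)

/-- `K` satisfies the cross-conjugated twisted reflection equation (CtRE) for all
`u, v` for which all factors are defined. -/
def IsCtRESol (N : ℕ) (q s : ℂ) (K : ℂ → Matrix (Fin N) (Fin N) ℂ) : Prop :=
  ∀ u v : ℂ, u ≠ 0 → v ≠ 0 → u / v ≠ q ^ 2 → u / v ≠ q⁻¹ ^ 2 →
    (s ^ N) ^ 2 * (u * v)⁻¹ ≠ q ^ 2 → (s ^ N) ^ 2 * (u * v)⁻¹ ≠ q⁻¹ ^ 2 →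
    CtREeq N q s K u v

/-- Transposition across the antidiagonal: `(M^w)_{ij} = M_{N+1-j, N+1-i}`. -/
def wT (N : ℕ) (M : Matrix (Fin N) (Fin N) ℂ) : Matrix (Fin N) (Fin N) ℂ :=
  Matrix.of fun i j => M (Fin.rev j) (Fin.rev i)

/-- `K̃` satisfies the twisted reflection equation (tRE)
`R(u/v) K̃1(u) R^{t1}(1/(uv)) K̃2(v) = K̃2(v) R^{t1}(1/(uv)) K̃1(u) R(u/v)`
for all `u, v` for which all factors are defined. -/
def IsTRESol (N : ℕ) (q : ℂ) (Kt : ℂ → Matrix (Fin N) (Fin N) ℂ) : Prop :=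
  ∀ u v : ℂ, u ≠ 0 → v ≠ 0 → u / v ≠ q ^ 2 → u / v ≠ q⁻¹ ^ 2 →
    (u * v)⁻¹ ≠ q ^ 2 → (u * v)⁻¹ ≠ q⁻¹ ^ 2 →
    RBJ N q (u / v) * M1 N (Kt u) * t1 N (RBJ N q (u * v)⁻¹) * M2 N (Kt v)
      = M2 N (Kt v) * t1 N (RBJ N q (u * v)⁻¹) * M1 N (Kt u) * RBJ N q (u / v)

lemma Em_apply (N a b : ℕ) (i j : Fin N) :
    Em N a b i j = if a = (i : ℕ) + 1 ∧ b = (j : ℕ) + 1 then 1 else 0 := by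
  simp only [Em, Matrix.of_apply, eq_comm]

lemma sum_Icc_fin {N : ℕ} (f : ℕ → ℂ) :
    ∑ i ∈ Finset.Icc 1 N, f i = ∑ i : Fin N, f ((i : ℕ) + 1) := by
  rw [Fin.sum_univ_eq_sum_range (fun i => f (i + 1)), Finset.range_eq_Ico,
    Finset.sum_Ico_add' f 0 N 1]
  rfl

lemma Em_succ_apply {N : ℕ} (a b i j : Fin N) :
    Em N ((a : ℕ) + 1) ((b : ℕ) + 1) i j = if a = i then (if b = j then 1 else 0) else 0 := by
  rw [Em_apply]
  simp only [add_left_inj, Fin.val_inj, ite_and]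

lemma Pmat_apply (N : ℕ) (a b c d : Fin N) :
    Pmat N (a, b) (c, d) = if b = c then (if a = d then 1 else 0) else 0 := by
  simp only [Pmat, Matrix.sum_apply, sum_Icc_fin, kroneckerMap_apply, Em_succ_apply]
  simp
  split_ifs <;> grind

lemma Rconst_apply (N : ℕ) (q : ℂ) (a b c d : Fin N) :
    Rconst N q (a, b) (c, d) =
      (if a = c ∧ b = d then (if a = b then q else 1) else 0)
        + (if a = d ∧ b = c ∧ a < b then q - q⁻¹ else 0) := by
  simp only [Rconst, Matrix.add_apply, Matrix.sum_apply, sum_Icc_fin, Matrix.smul_apply,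
    kroneckerMap_apply, Em_succ_apply, smul_eq_mul, add_left_inj, Fin.val_inj,
    add_lt_add_iff_right, Fin.val_fin_lt]
  congr 1
  · rw [Finset.sum_eq_single a (by intro i _ h; simp [h]) (by simp),
      Finset.sum_eq_single b (by intro i _ h; simp [h]) (by simp)]
    simp only [if_true]
    split_ifs <;> simp_all
  · rw [Finset.sum_eq_single a (by intro i _ h; simp [h]) (by simp),
      Finset.sum_eq_single b (by intro i _ h; simp [h]) (by simp)]
    simp only [if_true]
    split_ifs <;> grind

lemma Cmat_apply (N : ℕ) (q : ℂ) (a c : Fin N) :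
    Cmat N q a c = if a = Fin.rev c then (-q) ^ ((c : ℕ) + 1) else 0 := by
  simp only [Cmat, Matrix.sum_apply, sum_Icc_fin, Matrix.smul_apply, Em_apply, smul_eq_mul,
    add_left_inj, Fin.val_inj]
  rw [Finset.sum_eq_single c (by intro i _ h; simp [h]) (by simp)]
  have h : (N + 1 - ((c : ℕ) + 1) = (a : ℕ) + 1) ↔ a = Fin.rev c := by
    rw [Fin.ext_iff, Fin.val_rev]; omega
  simp only [h, and_true, mul_ite, mul_one, mul_zero]

lemma Pmat_mul_apply (N : ℕ) (X : Matrix (Fin N × Fin N) (Fin N × Fin N) ℂ) (a b : Fin N)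
    (p : Fin N × Fin N) : (Pmat N * X) (a, b) p = X (b, a) p := by
  rw [Matrix.mul_apply, Fintype.sum_prod_type]
  simp [Pmat_apply]

lemma mul_Pmat_apply (N : ℕ) (X : Matrix (Fin N × Fin N) (Fin N × Fin N) ℂ) (a b : Fin N)
    (p : Fin N × Fin N) : (X * Pmat N) p (a, b) = X p (b, a) := by
  rw [Matrix.mul_apply, Fintype.sum_prod_type]
  simp [Pmat_apply]

lemma flip_apply (N : ℕ) (X : Matrix (Fin N × Fin N) (Fin N × Fin N) ℂ) (a b c d : Fin N) :
    (Pmat N * X * Pmat N) (a, b) (c, d) = X (b, a) (d, c) := by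
  rw [mul_Pmat_apply, Pmat_mul_apply]

lemma Pmat_mul_self (N : ℕ) : Pmat N * Pmat N = 1 := by
  ext ⟨a, b⟩ ⟨c, d⟩
  rw [Pmat_mul_apply, Pmat_apply, Matrix.one_apply]
  simp [ite_and, Prod.ext_iff]

lemma flip_mul (N : ℕ) (X Y : Matrix (Fin N × Fin N) (Fin N × Fin N) ℂ) :
    Pmat N * (X * Y) * Pmat N = (Pmat N * X * Pmat N) * (Pmat N * Y * Pmat N) := by
  have h : (Pmat N * X * Pmat N) * (Pmat N * Y * Pmat N)
      = Pmat N * X * (Pmat N * Pmat N) * Y * Pmat N := by noncomm_ring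
  rw [h, Pmat_mul_self]
  noncomm_ring

lemma flip_M2 (N : ℕ) (X : Matrix (Fin N) (Fin N) ℂ) :
    Pmat N * M2 N X * Pmat N = M1 N X := by
  ext ⟨a, b⟩ ⟨c, d⟩
  rw [flip_apply]
  simp [M1, M2, mul_comm]

lemma Rconst_flip (N : ℕ) (q : ℂ) : Pmat N * Rconst N q * Pmat N = (Rconst N q)ᵀ := by
  ext ⟨a, b⟩ ⟨c, d⟩
  rw [flip_apply, Matrix.transpose_apply, Rconst_apply, Rconst_apply]
  congr 1 <;> grind

lemma Rconst_transpose_flip (N : ℕ) (q : ℂ) :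
    Pmat N * (Rconst N q)ᵀ * Pmat N = Rconst N q := by
  ext ⟨a, b⟩ ⟨c, d⟩
  have h := congrFun (congrFun (Rconst_flip N q) (c, d)) (a, b)
  rwa [flip_apply, Matrix.transpose_apply] at h ⊢

lemma RBJ_flip (N : ℕ) (q u : ℂ) : Pmat N * RBJ N q u * Pmat N = (RBJ N q u)ᵀ := by
  rw [RBJ, Matrix.mul_add, Matrix.add_mul, Matrix.transpose_add, Matrix.transpose_smul,
    Matrix.transpose_smul, Matrix.mul_smul, Matrix.smul_mul, Rconst_flip, Rconst_flip,
    Matrix.mul_smul, Matrix.smul_mul, Rconst_transpose_flip,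
    Matrix.transpose_transpose]

lemma t1_flip (N : ℕ) (q u : ℂ) :
    Pmat N * t1 N (RBJ N q u) * Pmat N = t1 N (RBJ N q u) := by
  ext ⟨a, b⟩ ⟨c, d⟩
  have h := congrFun (congrFun (RBJ_flip N q u) (a, d)) (c, b)
  rw [flip_apply, Matrix.transpose_apply] at h
  rw [flip_apply]
  simp only [t1, Matrix.of_apply]
  exact h

lemma CC_mul_apply (N : ℕ) (q : ℂ) (X : Matrix (Fin N × Fin N) (Fin N × Fin N) ℂ)
    (a b : Fin N) (p : Fin N × Fin N) :
    ((Cmat N q ⊗ₖ Cmat N q) * X) (a, b) p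
      = (-q) ^ ((a.rev : ℕ) + 1) * (-q) ^ ((b.rev : ℕ) + 1) * X (a.rev, b.rev) p := by
  have e : ∀ x y : Fin N, x = Fin.rev y ↔ y = Fin.rev x := fun x y => by
    constructor <;> rintro rfl <;> simp
  rw [Matrix.mul_apply, Fintype.sum_prod_type, Finset.sum_eq_single a.rev,
    Finset.sum_eq_single b.rev]
  · simp [Cmat_apply]
  · intro i _ h; simp [Cmat_apply, e b i, h]
  · simp
  · intro i _ h; simp [Cmat_apply, e a i, h]
  · simp

lemma mul_CC_apply (N : ℕ) (q : ℂ) (X : Matrix (Fin N × Fin N) (Fin N × Fin N) ℂ)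
    (c d : Fin N) (p : Fin N × Fin N) :
    (X * (Cmat N q ⊗ₖ Cmat N q)) p (c, d)
      = (-q) ^ ((c : ℕ) + 1) * (-q) ^ ((d : ℕ) + 1) * X p (c.rev, d.rev) := by
  rw [Matrix.mul_apply, Fintype.sum_prod_type, Finset.sum_eq_single c.rev,
    Finset.sum_eq_single d.rev]
  · simp [Cmat_apply, mul_comm]
  · intro i _ h; simp [Cmat_apply, h]
  · simp
  · intro i _ h; simp [Cmat_apply, h]
  · simp

/-- The parameter `p` of `C` is independent of `r`, so that the lemma applies to both terms
`R_q` and `R_{q⁻¹}` of `R(u)`. -/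
lemma Rconst_conj (N : ℕ) (p r : ℂ) :
    (Cmat N p ⊗ₖ Cmat N p) * (Rconst N r)ᵀ = Rconst N r * (Cmat N p ⊗ₖ Cmat N p) := by
  ext ⟨a, b⟩ ⟨c, d⟩
  rw [CC_mul_apply, mul_CC_apply, Matrix.transpose_apply, Rconst_apply, Rconst_apply]
  have e : ∀ x y : Fin N, x = Fin.rev y ↔ y = Fin.rev x := fun x y => by
    constructor <;> rintro rfl <;> simp
  simp only [e a, e b]
  by_cases h1 : c = a.rev ∧ d = b.rev
  · obtain ⟨rfl, rfl⟩ := h1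
    congr 1
    simp only [Fin.rev_inj]
    congr 1
    by_cases hab : a = b
    · subst hab; simp
    · have hba : b ≠ a := fun h => hab h.symm
      simp [hab, hba]
  · by_cases h2 : d = a.rev ∧ c = b.rev
    · obtain ⟨rfl, rfl⟩ := h2
      rw [mul_comm ((-p) ^ _)]
      congr 1
      simp only [Fin.rev_inj, true_and, Fin.rev_lt_rev]
      congr 1
      by_cases hab : a = b
      · subst hab; simp
      · have hba : b ≠ a := fun h => hab h.symm
        simp [hab, hba]
    · rw [if_neg h1, if_neg h1, if_neg, if_neg]
      · simp
      · grind
      · grind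

lemma RBJ_conj (N : ℕ) (p q u : ℂ) :
    (Cmat N p ⊗ₖ Cmat N p) * R21 N q u = RBJ N q u * (Cmat N p ⊗ₖ Cmat N p) := by
  have h2 : (Cmat N p ⊗ₖ Cmat N p) * Rconst N q⁻¹
      = (Rconst N q⁻¹)ᵀ * (Cmat N p ⊗ₖ Cmat N p) := by
    have hP : Pmat N * (Cmat N p ⊗ₖ Cmat N p) * Pmat N = Cmat N p ⊗ₖ Cmat N p := by
      ext ⟨a, b⟩ ⟨c, d⟩
      rw [flip_apply]
      simp [mul_comm]
    have h := congrArg (fun X => Pmat N * X * Pmat N) (Rconst_conj N p q⁻¹)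
    simpa only [flip_mul, hP, Rconst_transpose_flip, Rconst_flip] using h
  rw [R21, RBJ_flip, RBJ, Rconst_flip, Matrix.transpose_add, Matrix.transpose_smul,
    Matrix.transpose_smul, Matrix.transpose_transpose, Matrix.mul_add, Matrix.add_mul,
    Matrix.mul_smul, Matrix.mul_smul, Matrix.smul_mul, Matrix.smul_mul, Rconst_conj, h2]

lemma Cmat_isUnit (N : ℕ) (q : ℂ) (hq : q ≠ 0) : IsUnit (Cmat N q).det := by
  rw [← Matrix.isUnit_iff_isUnit_det]
  refine IsUnit.of_mul_eq_one
    (Matrix.of fun b c : Fin N => if b = Fin.rev c then ((-q) ^ ((b : ℕ) + 1))⁻¹ else 0) ?_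
  ext a c
  rw [Matrix.mul_apply, Finset.sum_eq_single (Fin.rev c)]
  · have : (-q) ^ ((c.rev : ℕ) + 1) ≠ 0 := pow_ne_zero _ (neg_ne_zero.mpr hq)
    simp only [Cmat_apply, Matrix.of_apply, Fin.rev_rev, if_true, Matrix.one_apply]
    split_ifs
    · exact mul_inv_cancel₀ this
    · simp
  · intro i _ h; simp [h]
  · simp

lemma M1_mul (N : ℕ) (X Y : Matrix (Fin N) (Fin N) ℂ) : M1 N (X * Y) = M1 N X * M1 N Y := by
  simp [M1, ← Matrix.mul_kronecker_mul]

lemma M2_mul (N : ℕ) (X Y : Matrix (Fin N) (Fin N) ℂ) : M2 N (X * Y) = M2 N X * M2 N Y := by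
  simp [M2, ← Matrix.mul_kronecker_mul]

lemma M1_comm_M2 (N : ℕ) (X Y : Matrix (Fin N) (Fin N) ℂ) :
    M1 N X * M2 N Y = M2 N Y * M1 N X := by
  simp [M1, M2, ← Matrix.mul_kronecker_mul]

/-- The two equations for fixed spectral parameters, with `x = u/v` and `y = q̃²/(uv)`. -/
lemma eqn_iff (N : ℕ) (q x y : ℂ) (hq : q ≠ 0) (A B : Matrix (Fin N) (Fin N) ℂ) :
    (RBJ N q x * M1 N A * t1 N (RBJ N q y) * M2 N B
      = M2 N B * t1 N (RBJ N q y) * M1 N A * RBJ N q x) ↔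
    (R21 N q x * M1 N ((Cmat N q)⁻¹ * A) *
        ((M2 N (Cmat N q))⁻¹ * t1 N (RBJ N q y) * M2 N (Cmat N q)) * M2 N ((Cmat N q)⁻¹ * B)
      = M2 N ((Cmat N q)⁻¹ * B) *
        (Pmat N * ((M2 N (Cmat N q))⁻¹ * t1 N (RBJ N q y) * M2 N (Cmat N q)) * Pmat N) *
        M1 N ((Cmat N q)⁻¹ * A) * RBJ N q x) := by
  have hC := Cmat_isUnit N q hq
  have hconj := RBJ_conj N q q x
  have hX := t1_flip N q y
  set C := Cmat N q
  set R := RBJ N q x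
  set X := t1 N (RBJ N q y)
  have hCC : C * C⁻¹ = 1 := Matrix.mul_nonsing_inv _ hC
  have hCC' : C⁻¹ * C = 1 := Matrix.nonsing_inv_mul _ hC
  have h1 : M1 N C * M1 N C⁻¹ = 1 := by rw [← M1_mul, hCC]; simp [M1]
  have h2 : M2 N C * M2 N C⁻¹ = 1 := by rw [← M2_mul, hCC]; simp [M2]
  have hinv : (M2 N C)⁻¹ = M2 N C⁻¹ := Matrix.inv_eq_right_inv h2
  have hc : C ⊗ₖ C = M1 N C * M2 N C := by simp [M1, M2, ← Matrix.mul_kronecker_mul]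
  set c := C ⊗ₖ C
  have hd : c * (M1 N C⁻¹ * M2 N C⁻¹) = 1 := by
    rw [hc, M1_comm_M2 N C⁻¹]
    calc M1 N C * M2 N C * (M2 N C⁻¹ * M1 N C⁻¹)
        = M1 N C * (M2 N C * M2 N C⁻¹) * M1 N C⁻¹ := by noncomm_ring
      _ = 1 := by rw [h2, mul_one, h1]
  set d := M1 N C⁻¹ * M2 N C⁻¹ with hdd
  have hd' : d * c = 1 := mul_eq_one_comm.mp hd
  have hRd : R21 N q x * d = d * R := by
    calc R21 N q x * d = (d * c) * R21 N q x * d := by rw [hd', one_mul]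
      _ = d * (c * R21 N q x) * d := by noncomm_ring
      _ = d * R * (c * d) := by rw [hconj]; noncomm_ring
      _ = d * R := by rw [hd, mul_one]
  have hL : R21 N q x * M1 N (C⁻¹ * A) * ((M2 N C)⁻¹ * X * M2 N C) * M2 N (C⁻¹ * B)
      = d * (R * M1 N A * X * M2 N B) := by
    rw [hinv, M1_mul, M2_mul]
    calc _ = R21 N q x * M1 N C⁻¹ * (M1 N A * M2 N C⁻¹) * X * (M2 N C * M2 N C⁻¹) * M2 N B := by
          noncomm_ring
      _ = (R21 N q x * d) * M1 N A * X * M2 N B := by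
          rw [h2, M1_comm_M2 N A, hdd]; noncomm_ring
      _ = _ := by rw [hRd]; noncomm_ring
  have hR : M2 N (C⁻¹ * B) * (Pmat N * ((M2 N C)⁻¹ * X * M2 N C) * Pmat N) * M1 N (C⁻¹ * A) * R
      = d * (M2 N B * X * M1 N A * R) := by
    rw [hinv, flip_mul, flip_mul, flip_M2, flip_M2, hX, M1_mul, M2_mul]
    calc _ = M2 N C⁻¹ * (M2 N B * M1 N C⁻¹) * X * (M1 N C * M1 N C⁻¹) * M1 N A * R := by
          noncomm_ring
      _ = (M2 N C⁻¹ * M1 N C⁻¹) * M2 N B * X * M1 N A * R := by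
          rw [h1, ← M1_comm_M2 N C⁻¹ B]; noncomm_ring
      _ = _ := by rw [← M1_comm_M2 N C⁻¹ C⁻¹, hdd]; noncomm_ring
  rw [hL, hR]
  constructor
  · intro h; rw [h]
  · intro h
    have h' := congrArg (fun Y => c * Y) h
    simpa only [← mul_assoc c d, hd, one_mul] using h'

/-- with `K(u) = C⁻¹ K̃(q̃⁻¹ u)`, the twisted reflection equation for `K̃`
is equivalent to the cross-conjugated twisted reflection equation for `K`. -/
theorem statement4 (N : ℕ) (hN : 2 ≤ N) (q s : ℂ) (hq : q ≠ 0) (hs : s ^ 2 = -q)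
    (Kt K : ℂ → Matrix (Fin N) (Fin N) ℂ)
    (hK : ∀ u, K u = (Cmat N q)⁻¹ * Kt ((s ^ N)⁻¹ * u)) :
    IsTRESol N q Kt ↔ IsCtRESol N q s K := by
  have ht : s ^ N ≠ 0 := by
    refine pow_ne_zero _ ?_
    rintro rfl
    exact hq (by simpa using hs.symm)
  constructor
  · intro h u v hu hv h1 h2 h3 h4
    have e1 : (s ^ N)⁻¹ * u / ((s ^ N)⁻¹ * v) = u / v := by field_simp
    have e2 : ((s ^ N)⁻¹ * u * ((s ^ N)⁻¹ * v))⁻¹ = (s ^ N) ^ 2 * (u * v)⁻¹ := by field_simp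
    have key := h ((s ^ N)⁻¹ * u) ((s ^ N)⁻¹ * v) (mul_ne_zero (inv_ne_zero ht) hu)
      (mul_ne_zero (inv_ne_zero ht) hv) (by rwa [e1]) (by rwa [e1]) (by rwa [e2]) (by rwa [e2])
    rw [e1, e2, eqn_iff N q _ _ hq] at key
    rw [CtREeq, hK u, hK v, Rvee21, Rvee]
    exact key
  · intro h u v hu hv h1 h2 h3 h4
    have e1 : s ^ N * u / (s ^ N * v) = u / v := by field_simp
    have e2 : (s ^ N) ^ 2 * (s ^ N * u * (s ^ N * v))⁻¹ = (u * v)⁻¹ := by field_simp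
    have e3 : ∀ w, (s ^ N)⁻¹ * (s ^ N * w) = w := fun w => by field_simp
    have key := h (s ^ N * u) (s ^ N * v) (mul_ne_zero ht hu)
      (mul_ne_zero ht hv) (by rwa [e1]) (by rwa [e1]) (by rwa [e2]) (by rwa [e2])
    rw [CtREeq, hK (s ^ N * u), hK (s ^ N * v), Rvee21, Rvee, e1, e2, e3, e3] at key
    exact (eqn_iff N q _ _ hq _ _).mpr key

end
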